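/- (Main theorem, upper bound.) If K_max is nonempty and R = max{P_τ : τ ∈ K_max}, then for every message length L the key appearance equivocation satisfies H(K | M^L C^L) ≤ log(|K|) · |K_max| · R^L. -/

import Mathlib

open scoped Classical

noncomputable section

/-- Probability of a word under the i.i.d. extension of the symbol distribution `P`. -/
def wordP {M : Type*} (P : M → ℝ) {L : ℕ} (m : Fin L → M) : ℝ := ∏ l, P (m l)

/-- Number of keys in `K` mapping the message `m` (letterwise) to the cryptogram `c`. -/
def keyCount {M : Type*} (K : Subgroup (Equiv.Perm M)) {L : ℕ} (m c : Fin L → M) : ℕ :=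
  Nat.card {k : Equiv.Perm M // k ∈ K ∧ ∀ l, k (m l) = c l}

/-- The key appearance equivocation `H(K | M^L C^L)` for the substitution cipher with
key space `K` (keys uniform), symbol distribution `P` and message length `L`. -/
def kae {M : Type*} [Fintype M] (K : Subgroup (Equiv.Perm M)) (P : M → ℝ) (L : ℕ) : ℝ :=
  ∑ m : Fin L → M, ∑ c : Fin L → M,
    wordP P m * (keyCount K m c : ℝ) / (Nat.card K : ℝ) * Real.log (keyCount K m c)

/-- The fixed set `F(π)` of a permutation. -/
def fixedSet {M : Type*} [Fintype M] [DecidableEq M] (π : Equiv.Perm M) : Finset M :=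
  Finset.univ.filter fun j => π j = j

/-- `P_π`: total probability of the fixed set of `π`. -/
def Pfix {M : Type*} [Fintype M] [DecidableEq M] (P : M → ℝ) (π : Equiv.Perm M) : ℝ :=
  ∑ j ∈ fixedSet π, P j

/-- A key is maximal if it is a non-identity element of `K` whose fixed set is maximal
under inclusion among fixed sets of non-identity elements of `K`. -/
def IsMaximalKey {M : Type*} [Fintype M] [DecidableEq M] (K : Subgroup (Equiv.Perm M))
    (π : Equiv.Perm M) : Prop :=
  π ∈ K ∧ π ≠ 1 ∧ ∀ τ ∈ K, τ ≠ 1 → fixedSet π ⊆ fixedSet τ → fixedSet τ = fixedSet π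

/-- The stabilizer of the message `m` in `K` is nontrivial. -/
def hasNontrivialStab {M : Type*} (K : Subgroup (Equiv.Perm M)) {L : ℕ} (m : Fin L → M) : Prop :=
  ∃ k ∈ K, k ≠ 1 ∧ ∀ l, k (m l) = m l

/-- Total probability of length-`L` messages with a nontrivial stabilizer in `K`. -/
def probNontrivial {M : Type*} [Fintype M] (K : Subgroup (Equiv.Perm M)) (P : M → ℝ)
    (L : ℕ) : ℝ :=
  ∑ m : Fin L → M, if hasNontrivialStab K m then wordP P m else 0

/-!
A pair `(m, c)` contributes to the equivocation only if at least two keys carry `m` to `c`, and the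
quotient of two such keys is a non-identity key fixing every letter of `m`. Since a pair never
leaves more than `log |K|` of key uncertainty, the equivocation is at most `log |K|` times the
probability that the message has a nontrivial stabilizer. Such a message is spelled with letters of
`F(τ)` for some maximal key `τ`; by independence this has probability `P_τ ^ L` for each `τ`, and a
union bound over the maximal keys concludes.
-/

lemma ite_exists_le_sum_ite {ι N : Type*} [Fintype ι] [AddCommMonoid N] [PartialOrder N]
    [IsOrderedAddMonoid N] (p : ι → Prop) [DecidablePred p] [Decidable (∃ i, p i)]
    {a : N} (ha : 0 ≤ a) :
    (if ∃ i, p i then a else 0) ≤ ∑ i, if p i then a else 0 := by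
  have term_nonneg (i : ι) : 0 ≤ if p i then a else 0 := ite_nonneg ha le_rfl
  split_ifs with hp
  · obtain ⟨i, hi⟩ := hp
    simpa only [if_pos hi] using
      Finset.single_le_sum (fun j _ => term_nonneg j) (Finset.mem_univ i)
  · exact Finset.sum_nonneg fun i _ => term_nonneg i

section KeyCount

variable {M : Type*} (K : Subgroup (Equiv.Perm M)) {L : ℕ}

lemma keyCount_le_card [Finite K] (m c : Fin L → M) : keyCount K m c ≤ Nat.card K :=
  Nat.card_le_card_of_injective (fun k => (⟨k.1, k.2.1⟩ : K))
    fun _ _ h => Subtype.ext (congrArg (fun k : K => k.1) h)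

lemma sum_keyCount [Fintype M] (m : Fin L → M) : ∑ c, keyCount K m c = Nat.card K := by
  let encrypt (k : K) : Fin L → M := fun l => (k : Equiv.Perm M) (m l)
  have keyCount_eq_card_fiber (c : Fin L → M) :
      keyCount K m c = Nat.card {k : K // encrypt k = c} :=
    Nat.card_congr
      { toFun k := ⟨⟨k.1, k.2.1⟩, funext k.2.2⟩
        invFun k := ⟨k.1.1, k.1.2, congrFun k.2⟩ }
  simp_rw [keyCount_eq_card_fiber]
  rw [← Nat.card_sigma, Nat.card_congr (Equiv.sigmaFiberEquiv encrypt)]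

variable {K}

lemma keyCount_le_one_of_not_hasNontrivialStab {m : Fin L → M} (hm : ¬hasNontrivialStab K m)
    (c : Fin L → M) : keyCount K m c ≤ 1 := by
  have keys_subsingleton : Subsingleton {k : Equiv.Perm M // k ∈ K ∧ ∀ l, k (m l) = c l} := by
    refine ⟨fun ⟨k, hkK, hk⟩ ⟨k', hkK', hk'⟩ => Subtype.ext ?_⟩
    by_contra hne
    refine hm ⟨k⁻¹ * k', K.mul_mem (K.inv_mem hkK) hkK', fun h => hne (inv_mul_eq_one.1 h),
      fun l => ?_⟩
    rw [Equiv.Perm.mul_apply, Equiv.Perm.inv_eq_iff_eq, hk', hk]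
  exact Finite.card_le_one_iff_subsingleton.2 keys_subsingleton

lemma log_keyCount_le_ite_hasNontrivialStab [Finite K] (m c : Fin L → M) :
    Real.log (keyCount K m c) ≤ if hasNontrivialStab K m then Real.log (Nat.card K) else 0 := by
  split_ifs with hm
  · rcases (keyCount K m c).eq_zero_or_pos with hzero | hpos
    · simpa only [hzero, Nat.cast_zero, Real.log_zero] using Real.log_natCast_nonneg (Nat.card K)
    · exact Real.log_le_log (mod_cast hpos) (mod_cast keyCount_le_card K m c)
  · exact Real.log_nonpos (Nat.cast_nonneg _)
      (mod_cast keyCount_le_one_of_not_hasNontrivialStab hm c)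

end KeyCount

section WordProbability

variable {M : Type*} {P : M → ℝ}

lemma wordP_nonneg (hP : ∀ x, 0 ≤ P x) {L : ℕ} (m : Fin L → M) : 0 ≤ wordP P m :=
  Finset.prod_nonneg fun l _ => hP (m l)

lemma sum_ite_forall_mem_wordP [Fintype M] [DecidableEq M] (P : M → ℝ) (L : ℕ)
    (F : Finset M) :
    ∑ m : Fin L → M, (if ∀ l, m l ∈ F then wordP P m else 0) = (∑ j ∈ F, P j) ^ L := by
  simp_rw [Finset.sum_pow', ← Fintype.mem_piFinset, Finset.sum_ite_mem, Finset.univ_inter, wordP]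

lemma kae_le_log_card_mul_probNontrivial [Fintype M] (K : Subgroup (Equiv.Perm M))
    (hP : ∀ x, 0 ≤ P x) (L : ℕ) :
    kae K P L ≤ Real.log (Nat.card K) * probNontrivial K P L := by
  have card_ne_zero : (Nat.card K : ℝ) ≠ 0 := mod_cast Nat.card_pos.ne'
  rw [kae, probNontrivial, Finset.mul_sum]
  refine Finset.sum_le_sum fun m _ => ?_
  set B : ℝ := if hasNontrivialStab K m then Real.log (Nat.card K) else 0 with hB
  calc ∑ c, wordP P m * keyCount K m c / Nat.card K * Real.log (keyCount K m c)
      ≤ ∑ c, wordP P m * keyCount K m c / Nat.card K * B := by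
        have weight_nonneg := wordP_nonneg hP m
        gcongr with c
        exact log_keyCount_le_ite_hasNontrivialStab m c
    _ = wordP P m * B := by
        rw [← Finset.sum_mul, ← Finset.sum_div, ← Finset.mul_sum, ← Nat.cast_sum, sum_keyCount,
          mul_div_cancel_right₀ _ card_ne_zero]
    _ = Real.log (Nat.card K) * if hasNontrivialStab K m then wordP P m else 0 := by
        rw [hB, mul_ite, mul_ite, mul_zero, mul_zero, mul_comm]

end WordProbability

section MaximalKeys

variable {M : Type*} [Fintype M] [DecidableEq M]

lemma mem_fixedSet {π : Equiv.Perm M} {j : M} : j ∈ fixedSet π ↔ π j = j := by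
  simp only [fixedSet, Finset.mem_filter, Finset.mem_univ, true_and]

lemma Pfix_nonneg {P : M → ℝ} (hP : ∀ x, 0 ≤ P x) (π : Equiv.Perm M) : 0 ≤ Pfix P π :=
  Finset.sum_nonneg fun j _ => hP j

lemma exists_isMaximalKey_fixedSet_subset {K : Subgroup (Equiv.Perm M)} {k : Equiv.Perm M}
    (hkK : k ∈ K) (hk : k ≠ 1) : ∃ τ, IsMaximalKey K τ ∧ fixedSet k ⊆ fixedSet τ := by
  obtain ⟨_, hsub, ⟨τ, hτK, hτ, rfl⟩, hmax⟩ :=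
    Finite.exists_le_maximal (p := fun F => ∃ τ ∈ K, τ ≠ 1 ∧ fixedSet τ = F) ⟨k, hkK, hk, rfl⟩
  exact ⟨τ, ⟨hτK, hτ, fun σ hσK hσ hτσ => (hmax ⟨σ, hσK, hσ, rfl⟩ hτσ).antisymm hτσ⟩, hsub⟩

variable (K : Subgroup (Equiv.Perm M))

lemma hasNontrivialStab_iff_exists_isMaximalKey {L : ℕ} (m : Fin L → M) :
    hasNontrivialStab K m ↔
      ∃ τ : {τ : Equiv.Perm M // IsMaximalKey K τ}, ∀ l, m l ∈ fixedSet τ.1 := by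
  constructor
  · rintro ⟨k, hkK, hk, hkm⟩
    obtain ⟨τ, hτ, hsub⟩ := exists_isMaximalKey_fixedSet_subset hkK hk
    exact ⟨⟨τ, hτ⟩, fun l => hsub (mem_fixedSet.2 (hkm l))⟩
  · rintro ⟨⟨τ, hτK, hτ, _⟩, hτm⟩
    exact ⟨τ, hτK, hτ, fun l => mem_fixedSet.1 (hτm l)⟩

lemma probNontrivial_le_sum_Pfix_pow {P : M → ℝ} (hP : ∀ x, 0 ≤ P x) (L : ℕ) :
    probNontrivial K P L ≤ ∑ τ : {τ : Equiv.Perm M // IsMaximalKey K τ}, Pfix P τ.1 ^ L := by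
  simp_rw [probNontrivial, hasNontrivialStab_iff_exists_isMaximalKey, Pfix,
    ← sum_ite_forall_mem_wordP]
  rw [Finset.sum_comm]
  exact Finset.sum_le_sum fun m _ => ite_exists_le_sum_ite _ (wordP_nonneg hP m)

end MaximalKeys

/-- Main theorem, upper bound: `H(K | M^L C^L) ≤ log|K| · |K_max| · R^L`. -/
theorem kae_upper_bound {M : Type*} [Fintype M] [DecidableEq M]
    (K : Subgroup (Equiv.Perm M)) (P : M → ℝ)
    (hP : ∀ x, 0 ≤ P x) (hsum : ∑ x, P x = 1) (L : ℕ) (R : ℝ)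
    (hmax : ∀ τ, IsMaximalKey K τ → Pfix P τ ≤ R)
    (hex : ∃ τ, IsMaximalKey K τ ∧ Pfix P τ = R) :
    kae K P L ≤ Real.log (Nat.card K) *
      (Nat.card {τ : Equiv.Perm M // IsMaximalKey K τ}) * R ^ L := by
  have sum_Pfix_pow_le : ∑ τ : {τ : Equiv.Perm M // IsMaximalKey K τ}, Pfix P τ.1 ^ L ≤
      Nat.card {τ : Equiv.Perm M // IsMaximalKey K τ} * R ^ L := by
    rw [Nat.card_eq_fintype_card, ← nsmul_eq_mul]
    exact Finset.sum_le_card_nsmul _ _ _ fun τ _ =>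
      pow_le_pow_left₀ (Pfix_nonneg hP τ.1) (hmax τ.1 τ.2) L
  calc kae K P L
      ≤ Real.log (Nat.card K) * probNontrivial K P L := kae_le_log_card_mul_probNontrivial K hP L
    _ ≤ Real.log (Nat.card K) *
          (Nat.card {τ : Equiv.Perm M // IsMaximalKey K τ} * R ^ L) :=
        mul_le_mul_of_nonneg_left ((probNontrivial_le_sum_Pfix_pow K hP L).trans sum_Pfix_pow_le)
          (Real.log_natCast_nonneg _)
    _ = _ := (mul_assoc _ _ _).symm
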